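/- For reals 0 < p < q < 1 and 0 < r < s < 1 with {p,q} ∩ {r,s} = ∅, the extended quarter-circle hooks Q(p,q) and Q(r,s) have nonempty intersection if and only if p < r < q < s or r < p < s < q (i.e., if and only if the intervals (p,q) and (r,s) interleave). -/

import Mathlib

/-- The extended quarter-circle hook
`Q(p,q) = ({p} × [√(1-q²), √(1-p²)]) ∪ ([p, 1] × {√(1-q²)})`. -/
noncomputable def Qhook (p q : ℝ) : Set (ℝ × ℝ) :=
  ({p} : Set ℝ) ×ˢ Set.Icc (Real.sqrt (1 - q ^ 2)) (Real.sqrt (1 - p ^ 2)) ∪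
    Set.Icc p 1 ×ˢ ({Real.sqrt (1 - q ^ 2)} : Set ℝ)

/-- Open intervals `(p,q)` and `(r,s)` interleave. -/
def Interleave (p q r s : ℝ) : Prop :=
  (p < r ∧ r < q ∧ q < s) ∨ (r < p ∧ p < s ∧ s < q)

theorem qhook_sqrt_le_iff (a b : ℝ) (ha : 0 < a) (ha1 : a < 1) (hb : 0 < b) :
    Real.sqrt (1 - a ^ 2) ≤ Real.sqrt (1 - b ^ 2) ↔ b ≤ a := by
  have h1 : 0 < 1 - a ^ 2 := by nlinarith
  constructor
  · intro h
    by_contra hc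
    have hlt : 1 - b ^ 2 < 1 - a ^ 2 := by nlinarith
    exact absurd h (not_le.mpr (Real.sqrt_lt_sqrt_iff_of_pos h1 |>.mpr hlt))
  · intro h
    exact Real.sqrt_le_sqrt (by nlinarith)

/-- Two extended quarter-circle hooks with distinct endpoints intersect iff their endpoint
intervals interleave. -/
theorem qhook_inter_iff_interleave (p q r s : ℝ)
    (hp : 0 < p) (hpq : p < q) (hq : q < 1)
    (hr : 0 < r) (hrs : r < s) (hs : s < 1)
    (hdisj : ({p, q} : Set ℝ) ∩ {r, s} = ∅) :
    (Qhook p q ∩ Qhook r s).Nonempty ↔ Interleave p q r s := by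
  have hpr : p ≠ r := by
    rintro rfl
    exact (Set.ext_iff.mp hdisj p).mp (by simp)
  have hqs : q ≠ s := by
    rintro rfl
    exact (Set.ext_iff.mp hdisj q).mp (by simp)
  have hps : p ≠ s := by
    rintro rfl
    exact (Set.ext_iff.mp hdisj p).mp (by simp)
  have hqr : q ≠ r := by
    rintro rfl
    exact (Set.ext_iff.mp hdisj q).mp (by simp)
  have hp1 : p < 1 := hpq.trans hq
  have hr1 : r < 1 := hrs.trans hs
  have hq0 : 0 < q := hp.trans hpq
  have hs0 : 0 < s := hr.trans hrs
  have key := qhook_sqrt_le_iff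
  constructor
  · rintro ⟨⟨x, y⟩, h1, h2⟩
    simp only [Qhook, Set.mem_union, Set.mem_prod, Set.mem_singleton_iff, Set.mem_Icc] at h1 h2
    rcases h1 with ⟨rfl, ha, hb⟩ | ⟨⟨ha, hb⟩, rfl⟩
    · rcases h2 with ⟨h, -⟩ | ⟨⟨hc, -⟩, rfl⟩
      · exact absurd h hpr
      · rw [key _ _ hq0 hq hs0] at ha
        rw [key _ _ hs0 hs hp] at hb
        exact Or.inr ⟨lt_of_le_of_ne hc hpr.symm, lt_of_le_of_ne hb hps,
          lt_of_le_of_ne ha hqs.symm⟩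
    · rcases h2 with ⟨rfl, hc, hd⟩ | ⟨-, h⟩
      · rw [key _ _ hs0 hs hq0] at hc
        rw [key _ _ hq0 hq hr] at hd
        exact Or.inl ⟨lt_of_le_of_ne ha hpr, lt_of_le_of_ne hd hqr.symm,
          lt_of_le_of_ne hc hqs⟩
      · exact absurd (le_antisymm ((key _ _ hs0 hs hq0).mp h.ge)
          ((key _ _ hq0 hq hs0).mp h.le)) hqs
  · rintro (⟨h1, h2, h3⟩ | ⟨h1, h2, h3⟩)
    · exact ⟨(r, Real.sqrt (1 - q ^ 2)), Or.inr ⟨⟨h1.le, hr1.le⟩, rfl⟩,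
        Or.inl ⟨rfl, (key _ _ hs0 hs hq0).mpr h3.le, (key _ _ hq0 hq hr).mpr h2.le⟩⟩
    · exact ⟨(p, Real.sqrt (1 - s ^ 2)),
        Or.inl ⟨rfl, (key _ _ hq0 hq hs0).mpr h3.le, (key _ _ hs0 hs hp).mpr h2.le⟩,
        Or.inr ⟨⟨h1.le, hp1.le⟩, rfl⟩⟩
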